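/- arXiv:2108.07551 — 4 statements merged into one kernel-verified Lean document; each statement's English description precedes it below -/
import Mathlib

section
/- A finite simple graph G is chordal if and only if G has a perfect elimination order. -/
/-- A tree-decomposition of a graph `G` indexed by nodes of type `ι`. -/
structure TreeDecomp {V : Type} (G : SimpleGraph V) (ι : Type) where
  tree : SimpleGraph ι
  isTree : tree.IsTree
  bag : ι → Finset V
  bags_cover : ∀ v : V, ∃ i : ι, v ∈ bag i
  edges_covered : ∀ ⦃u v : V⦄, G.Adj u v → ∃ i : ι, u ∈ bag i ∧ v ∈ bag i
  bags_connected : ∀ v : V, (tree.induce {i : ι | v ∈ bag i}).Connected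

/-- The treewidth of `G`: the smallest `k` such that `G` has a tree-decomposition
all of whose bags have at most `k + 1` vertices (i.e. of width at most `k`). -/
noncomputable def treewidth {V : Type} (G : SimpleGraph V) : ℕ :=
  sInf { k : ℕ | ∃ (ι : Type) (td : TreeDecomp G ι), ∀ i : ι, (td.bag i).card ≤ k + 1 }

/-- The neighborhood `N_G(C)` of a vertex set `C`. -/
def nbhd {V : Type} (G : SimpleGraph V) (C : Set V) : Set V :=
  {v : V | v ∉ C ∧ ∃ u ∈ C, G.Adj u v}

/-- `S` separates `a` from `b` in `G`: `a, b ∉ S` and every walk from `a` to `b` meets `S`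
(so `a` and `b` lie in distinct components of `G` minus `S`). -/
def Separates {V : Type} (G : SimpleGraph V) (S : Set V) (a b : V) : Prop :=
  a ∉ S ∧ b ∉ S ∧ ∀ p : G.Walk a b, ∃ v ∈ p.support, v ∈ S

/-- `C` is a connected component of `G` minus `S`. -/
def IsCompOf {V : Type} (G : SimpleGraph V) (S : Set V) (C : Set V) : Prop :=
  C.Nonempty ∧ Disjoint C S ∧ (G.induce C).Connected ∧
    ∀ D : Set V, C ⊆ D → Disjoint D S → (G.induce D).Connected → D = C

/-- `S` is a separator of `G`: `G` minus `S` has more than one connected component. -/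
def IsSeparator {V : Type} (G : SimpleGraph V) (S : Set V) : Prop :=
  ∃ C D : Set V, IsCompOf G S C ∧ IsCompOf G S D ∧ C ≠ D

/-- `C` is a full component of `S` in `G`. -/
def IsFullCompOf {V : Type} (G : SimpleGraph V) (S : Set V) (C : Set V) : Prop :=
  IsCompOf G S C ∧ nbhd G C = S

/-- `S` is a minimal separator of `G`: it has at least two full components. -/
def IsMinSep {V : Type} (G : SimpleGraph V) (S : Set V) : Prop :=
  ∃ C D : Set V, IsFullCompOf G S C ∧ IsFullCompOf G S D ∧ C ≠ D

/-- `R` crosses `S` if `R` separates some pair of vertices of `S`. -/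
def Crosses {V : Type} (G : SimpleGraph V) (R S : Set V) : Prop :=
  ∃ a b : V, a ∈ S ∧ b ∈ S ∧ Separates G R a b

/-- `G` is chordal: every cycle with more than 3 vertices has a chord. -/
def IsChordal {V : Type} (G : SimpleGraph V) : Prop :=
  ∀ ⦃v : V⦄ (c : G.Walk v v), c.IsCycle → 3 < c.length →
    ∃ u w : V, u ∈ c.support ∧ w ∈ c.support ∧ G.Adj u w ∧ s(u, w) ∉ c.edges

/-- `H` is a triangulation of `G`. -/
def IsTriangulationOf {V : Type} (H G : SimpleGraph V) : Prop :=
  IsChordal H ∧ G ≤ H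

/-- `H` is a minimal triangulation of `G`. -/
def IsMinimalTriangulationOf {V : Type} (H G : SimpleGraph V) : Prop :=
  IsTriangulationOf H G ∧ ∀ H' : SimpleGraph V, IsTriangulationOf H' G → H' ≤ H → H' = H

/-- `K(S)`: the graph on the same vertex type whose edges join all pairs of
distinct vertices of `S`. -/
def completeOn {V : Type} (S : Set V) : SimpleGraph V :=
  SimpleGraph.fromRel (fun a b => a ∈ S ∧ b ∈ S)

/-- `s` is a maximal clique of `G`. -/
def IsMaximalClique {V : Type} (G : SimpleGraph V) (s : Set V) : Prop :=
  G.IsClique s ∧ ∀ t : Set V, G.IsClique t → s ⊆ t → s = t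

/-- `fill G td`: fill every bag of the tree-decomposition `td` into a clique. -/
def fill {V ι : Type} (G : SimpleGraph V) (td : TreeDecomp G ι) : SimpleGraph V :=
  G ⊔ SimpleGraph.fromRel (fun a b => ∃ i : ι, a ∈ td.bag i ∧ b ∈ td.bag i)

/-- The nodes of the maximal subtree `T(i,j)` of the tree containing `i` but not `j`
(for adjacent `i`, `j`): the nodes reachable from `i` after deleting the edge `{i, j}`. -/
def sideNodes {V ι : Type} {G : SimpleGraph V} (td : TreeDecomp G ι) (i j : ι) : Set ι :=
  {t : ι | (td.tree.deleteEdges {s(i, j)}).Reachable i t}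

/-- `V(i,j)`: the union of the bags of nodes in `T(i,j)`, with the vertices of the
bag of `j` removed. -/
def sideVerts {V ι : Type} {G : SimpleGraph V} (td : TreeDecomp G ι) (i j : ι) : Set V :=
  (⋃ t ∈ sideNodes td i j, (td.bag t : Set V)) \ (td.bag j : Set V)

/-- A perfect elimination order of `G`. -/
def IsPerfectElimOrder {V : Type} [Fintype V] (G : SimpleGraph V)
    (e : Fin (Fintype.card V) ≃ V) : Prop :=
  ∀ i : Fin (Fintype.card V),
    G.IsClique {u : V | G.Adj (e i) u ∧ ∃ j : Fin (Fintype.card V), i < j ∧ e j = u}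

/-- `H` is a minor of `G`, via the branch-set (minor model) characterization. -/
def IsMinorOf {W V : Type} (H : SimpleGraph W) (G : SimpleGraph V) : Prop :=
  ∃ B : W → Set V,
    (∀ w : W, (B w).Nonempty) ∧
    (∀ w : W, (G.induce (B w)).Connected) ∧
    (Pairwise fun w₁ w₂ : W => Disjoint (B w₁) (B w₂)) ∧
    ∀ ⦃w₁ w₂ : W⦄, H.Adj w₁ w₂ → ∃ a ∈ B w₁, ∃ b ∈ B w₂, G.Adj a b

/-- There is a clique minor of `G` minus `C` rooted on `R`, given by branch sets
`B v ∋ v` for `v ∈ R`: disjoint from `C`, pairwise disjoint, each connected, with an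
edge of `G` between every two of them. -/
def HasCliqueMinorRootedAvoiding {V : Type} (G : SimpleGraph V) (R C : Set V) : Prop :=
  ∃ B : R → Set V,
    (∀ v : R, (v : V) ∈ B v) ∧
    (∀ v : R, Disjoint (B v) C) ∧
    (∀ v : R, (G.induce (B v)).Connected) ∧
    (∀ u v : R, u ≠ v → Disjoint (B u) (B v)) ∧
    (∀ u v : R, u ≠ v → ∃ a ∈ B u, ∃ b ∈ B v, G.Adj a b)

/-- `S` is a minor-safe separator of `G`: for every component `C` of `G` minus `S`,
there is a clique minor of `G` minus `C` rooted on `N_G(C)`. -/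
def MinorSafe {V : Type} (G : SimpleGraph V) (S : Set V) : Prop :=
  ∀ C : Set V, IsCompOf G S C → HasCliqueMinorRootedAvoiding G (nbhd G C) C

/-- The graph on `V` that keeps the edges of `G` with both endpoints in `T`. -/
def edgesWithin {V : Type} (G : SimpleGraph V) (T : Set V) : SimpleGraph V where
  Adj a b := G.Adj a b ∧ a ∈ T ∧ b ∈ T
  symm := ⟨fun _ _ h => ⟨h.1.symm, h.2.2, h.2.1⟩⟩
  loopless := ⟨fun _ h => h.1.ne rfl⟩

lemma edgesWithin_le {V : Type} (G : SimpleGraph V) (T : Set V) : edgesWithin G T ≤ G :=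
  fun _ _ h => h.1

lemma edgesWithin_mono {V : Type} (G : SimpleGraph V) {T U : Set V} (h : T ⊆ U) :
    edgesWithin G T ≤ edgesWithin G U :=
  fun _ _ hab => ⟨hab.1, h hab.2.1, h hab.2.2⟩

lemma mem_of_mem_support_edgesWithin {V : Type} {G : SimpleGraph V} {T : Set V} {a b : V}
    (p : (edgesWithin G T).Walk a b) (ha : a ∈ T) : ∀ z ∈ p.support, z ∈ T := by
  induction p with
  | nil => simpa using ha
  | cons h p ih =>
    intro z hz
    rcases List.mem_cons.1 (by simpa using hz) with rfl | hz
    · exact ha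
    · exact ih h.2.2 z hz

/-- A shortest walk has no chord. -/
lemma mem_edges_of_length_eq_dist {V : Type} {G : SimpleGraph V} {a b u w : V}
    (p : G.Walk a b) (hp : p.length = G.dist a b) (hu : u ∈ p.support) (hw : w ∈ p.support)
    (huw : G.Adj u w) : s(u, w) ∈ p.edges := by
  obtain ⟨i, rfl, hi⟩ := SimpleGraph.Walk.mem_support_iff_exists_getVert.1 hu
  obtain ⟨j, rfl, hj⟩ := SimpleGraph.Walk.mem_support_iff_exists_getVert.1 hw
  wlog hij : i ≤ j generalizing i j
  · rw [Sym2.eq_swap]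
    exact this j hj hw i hi hu huw.symm (by lia)
  have hne : i ≠ j := by
    rintro rfl
    exact huw.ne rfl
  have hle := SimpleGraph.dist_le ((p.take i).append (.cons huw (p.drop j)))
  simp only [SimpleGraph.Walk.length_append, SimpleGraph.Walk.length_cons,
    SimpleGraph.Walk.take_length, SimpleGraph.Walk.drop_length] at hle
  obtain rfl : j = i + 1 := by lia
  exact (p.mk_mem_edges_iff_exists).2 ⟨i, by lia, rfl⟩

/-- In a chordal graph, two neighbours of `v` joined by a path whose interior avoids the closed
neighbourhood of `v` are adjacent. -/
lemma IsChordal.adj_of_reachable {V : Type} {G : SimpleGraph V} (hG : IsChordal G) {R : Set V}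
    {v x y : V} (hvR : v ∉ R) (hR : ∀ z ∈ R, ¬ G.Adj v z) (hx : G.Adj v x) (hy : G.Adj v y)
    (hxy : x ≠ y) (hr : (edgesWithin G (R ∪ {x, y})).Reachable x y) : G.Adj x y := by
  by_contra hnadj
  obtain ⟨p, hp⟩ := hr.exists_walk_length_eq_dist
  have hT := mem_of_mem_support_edgesWithin p (by simp)
  have hvp : v ∉ p.support := fun h => by
    rcases hT v h with h | rfl | rfl
    exacts [hvR h, hx.ne rfl, hy.ne rfl]
  have hlen : 2 ≤ p.length := by
    by_contra! hlt
    interval_cases h : p.length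
    · exact hxy (SimpleGraph.Walk.eq_of_length_eq_zero h)
    · exact hnadj (edgesWithin_le _ _ (SimpleGraph.Walk.adj_of_length_eq_one h))
  let q := (p.mapLe (edgesWithin_le G _)).concat hy.symm
  have hqe : q.edges = p.edges ++ [s(y, v)] := by
    simp [q, SimpleGraph.Walk.edges_concat]
  have hqs : q.support = p.support ++ [v] := by
    simp [q, SimpleGraph.Walk.support_concat]
  have hcyc : (SimpleGraph.Walk.cons hx q).IsCycle := by
    rw [SimpleGraph.Walk.cons_isCycle_iff]
    constructor
    · refine SimpleGraph.Walk.IsPath.concat ((p.isPath_of_length_eq_dist hp).mapLe _) ?_ _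
      rwa [SimpleGraph.Walk.support_mapLe_eq_support]
    · rw [hqe, List.mem_append]
      rintro (h | h)
      · exact hvp (p.fst_mem_support_of_mem_edges h)
      · simp only [List.mem_singleton, Sym2.eq_iff] at h
        grind
  have chord_at_v : ∀ w ∈ p.support, G.Adj v w →
      s(v, w) ∈ (SimpleGraph.Walk.cons hx q).edges := by
    intro w hw hvw
    rcases hT w hw with h | rfl | rfl
    · exact absurd hvw (hR w h)
    · simp
    · simp [hqe, Sym2.eq_swap]
  obtain ⟨u, w, hu, hw, huw, hne⟩ := hG _ hcyc (by simp [q]; lia)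
  have mem_cycle : ∀ z ∈ (SimpleGraph.Walk.cons hx q).support, z = v ∨ z ∈ p.support := by
    intro z hz
    simp only [SimpleGraph.Walk.support_cons, hqs, List.mem_cons, List.mem_append] at hz
    grind
  rcases mem_cycle u hu with rfl | hup
  · rcases mem_cycle w hw with rfl | hwp
    · exact huw.ne rfl
    · exact hne (chord_at_v w hwp huw)
  · rcases mem_cycle w hw with rfl | hwp
    · rw [Sym2.eq_swap] at hne
      exact hne (chord_at_v u hup huw.symm)
    · have := mem_edges_of_length_eq_dist p hp hup hwp ⟨huw, hT u hup, hT w hwp⟩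
      exact hne (by simp [hqe, this])

/-- In every induced subgraph of a chordal graph, a vertex `v` that is not adjacent to all other
vertices has a simplicial vertex among its non-neighbours. -/
lemma IsChordal.exists_simplicial_not_adj {V : Type} {G : SimpleGraph V} (hG : IsChordal G)
    (S : Finset V) {v z₀ : V} (hz₀ : z₀ ∈ S) (hne : z₀ ≠ v) (hnadj : ¬ G.Adj v z₀) (hv : v ∈ S) :
    ∃ w ∈ S, w ≠ v ∧ ¬ G.Adj v w ∧ G.IsClique {u | G.Adj w u ∧ u ∈ S} := by
  classical
  induction S using Finset.strongInduction generalizing v z₀ with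
  | H S ih =>
  let R : Set V := {z | z ∈ S ∧ z ≠ v ∧ ¬ G.Adj v z}
  let C : Set V := {z | (edgesWithin G R).Reachable z₀ z}
  have hCR : ∀ z ∈ C, z ∈ R := fun z ⟨p⟩ =>
    mem_of_mem_support_edgesWithin p ⟨hz₀, hne, hnadj⟩ z p.end_mem_support
  have hCstep : ∀ z ∈ C, ∀ u ∈ R, G.Adj z u → u ∈ C := fun z hz u hu hzu =>
    SimpleGraph.Reachable.trans hz (SimpleGraph.Adj.reachable ⟨hzu, hCR z hz, hu⟩)
  let N : Set V := {x | x ∈ S ∧ G.Adj v x ∧ ∃ c ∈ C, G.Adj c x}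
  have hN : G.IsClique N := by
    rintro x ⟨-, hvx, c, hc, hcx⟩ y ⟨-, hvy, d, hd, hdy⟩ hxy
    refine hG.adj_of_reachable (R := R) (fun h => h.2.1 rfl) (fun z hz => hz.2.2) hvx hvy hxy ?_
    have hcd : (edgesWithin G (R ∪ {x, y})).Reachable c d :=
      (SimpleGraph.Reachable.trans (SimpleGraph.Reachable.symm hc) hd).mono
        (edgesWithin_mono G Set.subset_union_left)
    have hxc : (edgesWithin G (R ∪ {x, y})).Adj x c := ⟨hcx.symm, by simp, .inl (hCR c hc)⟩
    have hdy : (edgesWithin G (R ∪ {x, y})).Adj d y := ⟨hdy, .inl (hCR d hd), by simp⟩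
    exact hxc.reachable.trans (hcd.trans hdy.reachable)
  let U : Finset V := S.filter (fun z => z ∈ C ∨ z ∈ N)
  have hU : ∀ z, z ∈ U ↔ z ∈ C ∨ z ∈ N := fun z => by
    simp only [U, Finset.mem_filter, and_iff_right_iff_imp]
    rintro (h | h)
    exacts [(hCR z h).1, h.1]
  have hssub : U ⊂ S := by
    refine (Finset.ssubset_iff_of_subset (Finset.filter_subset _ _)).2 ⟨v, hv, fun h => ?_⟩
    rcases (hU v).1 h with h | h
    exacts [(hCR v h).2.1 rfl, h.2.1.ne rfl]
  have extend_to_S : ∀ w ∈ C, G.IsClique {u | G.Adj w u ∧ u ∈ U} →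
      ∃ w ∈ S, w ≠ v ∧ ¬ G.Adj v w ∧ G.IsClique {u | G.Adj w u ∧ u ∈ S} := by
    intro w hw hcl
    obtain ⟨hwS, hwv, hvw⟩ := hCR w hw
    refine ⟨w, hwS, hwv, hvw, hcl.subset ?_⟩
    rintro u ⟨hwu, hu⟩
    refine ⟨hwu, (hU u).2 ?_⟩
    by_cases hvu : G.Adj v u
    · exact .inr ⟨hu, hvu, w, hw, hwu⟩
    · refine .inl (hCstep w hw u ⟨hu, ?_, hvu⟩ hwu)
      rintro rfl
      exact hvw hwu.symm
  by_cases hNuniv : ∃ x ∈ N, ∃ z ∈ U, z ≠ x ∧ ¬ G.Adj x z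
  · obtain ⟨x, hx, z, hz, hzx, hxz⟩ := hNuniv
    obtain ⟨w, hw, hwx, hxw, hcl⟩ := ih U hssub hz hzx hxz ((hU x).2 (.inr hx))
    rcases (hU w).1 hw with hwC | hwN
    · exact extend_to_S w hwC hcl
    · exact absurd (hN hx hwN hwx.symm) hxw
  by_cases hCuniv : ∃ x ∈ C, ∃ z ∈ U, z ≠ x ∧ ¬ G.Adj x z
  · obtain ⟨x, hx, z, hz, hzx, hxz⟩ := hCuniv
    have hxU := (hU x).2 (.inl hx)
    obtain ⟨w, hw, hwx, hxw, hcl⟩ := ih U hssub hz hzx hxz hxU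
    rcases (hU w).1 hw with hwC | hwN
    · exact extend_to_S w hwC hcl
    · exact absurd ⟨w, hwN, x, hxU, hwx.symm, fun h => hxw h.symm⟩ hNuniv
  · push Not at hNuniv hCuniv
    refine extend_to_S z₀ (SimpleGraph.Reachable.refl z₀) ?_
    rintro a ⟨-, ha⟩ b ⟨-, hb⟩ hab
    rcases (hU a).1 ha with haC | haN
    exacts [hCuniv a haC b hb hab.symm, hNuniv a haN b hb hab.symm]

/-- Every nonempty induced subgraph of a chordal graph has a simplicial vertex. -/
lemma IsChordal.exists_simplicial {V : Type} {G : SimpleGraph V} (hG : IsChordal G)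
    (S : Finset V) (hS : S.Nonempty) : ∃ w ∈ S, G.IsClique {u | G.Adj w u ∧ u ∈ S} := by
  by_cases h : ∃ v ∈ S, ∃ z ∈ S, z ≠ v ∧ ¬ G.Adj v z
  · obtain ⟨v, hv, z, hz, hzv, hvz⟩ := h
    obtain ⟨w, hw, -, -, hcl⟩ := hG.exists_simplicial_not_adj S hz hzv hvz hv
    exact ⟨w, hw, hcl⟩
  · push Not at h
    obtain ⟨w, hw⟩ := hS
    exact ⟨w, hw, fun a ha b hb hab => h a ha.2 b hb.2 hab.symm⟩

/-- The vertices of any finite set in a chordal graph can be listed so that each is simplicial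
in the graph induced by itself and its successors. -/
lemma IsChordal.exists_elimination_list {V : Type} {G : SimpleGraph V} (hG : IsChordal G)
    (S : Finset V) : ∃ l : List V, l.Nodup ∧ (∀ x, x ∈ l ↔ x ∈ S) ∧
      ∀ a t, a :: t <:+ l → G.IsClique {u | G.Adj a u ∧ u ∈ t} := by
  classical
  induction S using Finset.strongInduction with
  | H S ih =>
  rcases S.eq_empty_or_nonempty with rfl | hS
  · exact ⟨[], by simp⟩
  obtain ⟨w, hw, hcl⟩ := hG.exists_simplicial S hS
  obtain ⟨l, hnd, hmem, hl⟩ := ih (S.erase w) (Finset.erase_ssubset hw)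
  refine ⟨w :: l, by simp [hnd, hmem], fun x => ?_, fun a t hat => ?_⟩
  · simp only [List.mem_cons, hmem, Finset.mem_erase]
    grind
  · rcases List.suffix_cons_iff.1 hat with h | h
    · obtain ⟨rfl, rfl⟩ := List.cons_eq_cons.1 h
      refine hcl.subset ?_
      exact fun u hu => ⟨hu.1, Finset.mem_of_mem_erase ((hmem u).1 hu.2)⟩
    · exact hl a t h

lemma IsChordal.exists_isPerfectElimOrder {V : Type} [Fintype V] {G : SimpleGraph V}
    (hG : IsChordal G) : ∃ e : Fin (Fintype.card V) ≃ V, IsPerfectElimOrder G e := by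
  classical
  obtain ⟨l, hnd, hmem, hl⟩ := hG.exists_elimination_list Finset.univ
  let f := hnd.getEquivOfForallMemList l (by simpa using hmem)
  have hcard : Fintype.card V = l.length := by simpa using (Fintype.card_congr f).symm
  refine ⟨(finCongr hcard).trans f, fun i => ?_⟩
  have hi : (i : ℕ) < l.length := hcard ▸ i.2
  refine (hl _ _ ((List.drop_eq_getElem_cons hi) ▸ List.drop_suffix i l)).subset ?_
  rintro u ⟨hu, j, hij, rfl⟩
  refine ⟨hu, List.mem_iff_getElem.2 ⟨j - (i + 1), ?_, ?_⟩⟩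
  · have hj : (j : ℕ) < l.length := hcard ▸ j.2
    simp only [List.length_drop]
    lia
  · have : (i : ℕ) + 1 + (j - (i + 1)) = j := by lia
    simp [f, List.getElem_drop, this]

lemma IsPerfectElimOrder.isChordal {V : Type} [Fintype V] {G : SimpleGraph V}
    {e : Fin (Fintype.card V) ≃ V} (he : IsPerfectElimOrder G e) : IsChordal G := by
  classical
  intro v₀ c₀ hc₀ hlen₀
  obtain ⟨v, hv, hmin⟩ := c₀.support.toFinset.exists_min_image e.symm ⟨v₀, by simp⟩
  simp only [List.mem_toFinset] at hv hmin
  have hedges : ∀ x, x ∈ (c₀.rotate v hv).edges ↔ x ∈ c₀.edges := fun x =>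
    (c₀.rotate_edges v hv).mem_iff
  have hsupp : ∀ x, x ∈ (c₀.rotate v hv).support ↔ x ∈ c₀.support := fun x =>
    c₀.mem_support_rotate_iff v hv
  have hlen : 3 < (c₀.rotate v hv).length := by simpa using hlen₀
  have hc := hc₀.rotate hv
  generalize c₀.rotate v hv = c at *
  have hlater : ∀ x ∈ c.support, G.Adj v x →
      x ∈ {u | G.Adj (e (e.symm v)) u ∧ ∃ j, e.symm v < j ∧ e j = u} := fun x hx hvx =>
    ⟨by simpa using hvx, e.symm x,
      lt_of_le_of_ne (hmin x ((hsupp x).1 hx)) (fun h => hvx.ne (e.symm.injective h)), by simp⟩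
  have hs := c.getVert_mem_support 1
  have ht := c.getVert_mem_support (c.length - 1)
  refine ⟨c.snd, c.penultimate, (hsupp _).1 hs, (hsupp _).1 ht,
    he (e.symm v) (hlater _ hs (c.adj_snd hc.not_nil))
      (hlater _ ht (c.adj_penultimate hc.not_nil).symm) hc.snd_ne_penultimate, ?_⟩
  rw [← hedges, SimpleGraph.Walk.mk_mem_edges_iff_exists]
  rintro ⟨i, hi, h⟩
  have inj : ∀ a b, 1 ≤ a → a ≤ c.length → 1 ≤ b → b ≤ c.length →
      c.getVert a = c.getVert b → a = b := fun a b ha hac hb hbc hab =>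
    hc.getVert_injOn ⟨ha, hac⟩ ⟨hb, hbc⟩ hab
  have h0 : c.getVert 0 = c.getVert c.length := by simp
  simp only [SimpleGraph.Walk.snd, SimpleGraph.Walk.penultimate, Sym2.eq_iff] at h
  rcases Nat.eq_zero_or_pos i with rfl | hpos
  · rw [h0] at h
    grind
  · grind

/-- a finite graph is chordal iff it has a perfect elimination order. -/
theorem chordal_iff_perfectElimOrder {V : Type} [Fintype V] (G : SimpleGraph V) :
    IsChordal G ↔ ∃ e : Fin (Fintype.card V) ≃ V, IsPerfectElimOrder G e := by
  exact ⟨fun h => h.exists_isPerfectElimOrder, fun ⟨_, he⟩ => he.isChordal⟩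
end

section
/- If G is a finite simple chordal graph, then no pair of minimal separators S_1 and S_2 of G cross each other, i.e., for any two minimal separators S_1 and S_2 of G, S_1 does not separate any pair of vertices of S_2. -/
/-- If no walk from `a` to `b` inside `X` is shorter than `p`, then `p` has no chord. -/
lemma mem_edges_of_shortest_walk {V : Type} {G : SimpleGraph V} {X : Set V} {a b u w : V}
    {p : G.Walk a b} (hpX : ∀ v ∈ p.support, v ∈ X)
    (hmin : ∀ q : G.Walk a b, (∀ v ∈ q.support, v ∈ X) → p.length ≤ q.length)
    (hu : u ∈ p.support) (hw : w ∈ p.support) (huw : G.Adj u w) : s(u, w) ∈ p.edges := by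
  have mem_of_length_le_one : ∀ {x y : V} (q : G.Walk x y), x ≠ y → q.length ≤ 1 →
      s(x, y) ∈ q.edges := by
    intro x y q hxy hq
    cases q with
    | nil => exact absurd rfl hxy
    | cons h r =>
      cases r with
      | nil => simp
      | cons h' r => simp at hq
  obtain ⟨p₁, p₂, rfl⟩ := p.mem_support_iff_exists_append.mp hu
  rcases (SimpleGraph.Walk.mem_support_append_iff p₁ p₂).mp hw with hw | hw
  · obtain ⟨r₁, r₂, rfl⟩ := p₁.mem_support_iff_exists_append.mp hw
    have hlen := hmin (r₁.append (.cons huw.symm p₂)) (by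
      intro v hv
      apply hpX
      simp only [SimpleGraph.Walk.mem_support_append_iff, SimpleGraph.Walk.support_cons,
        List.mem_cons] at hv ⊢
      rcases hv with h | rfl | h
      · exact .inl (.inl h)
      · exact .inl (.inl r₁.end_mem_support)
      · exact .inr h)
    simp only [SimpleGraph.Walk.length_append, SimpleGraph.Walk.length_cons] at hlen
    have := mem_of_length_le_one r₂ huw.ne' (by omega)
    rw [Sym2.eq_swap] at this
    simp [this]
  · obtain ⟨r₁, r₂, rfl⟩ := p₂.mem_support_iff_exists_append.mp hw
    have hlen := hmin (p₁.append (.cons huw r₂)) (by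
      intro v hv
      apply hpX
      simp only [SimpleGraph.Walk.mem_support_append_iff, SimpleGraph.Walk.support_cons,
        List.mem_cons] at hv ⊢
      rcases hv with h | rfl | h
      · exact .inl h
      · exact .inl p₁.end_mem_support
      · exact .inr (.inr h))
    simp only [SimpleGraph.Walk.length_append, SimpleGraph.Walk.length_cons] at hlen
    simp [mem_of_length_le_one r₁ huw.ne (by omega)]

/-- Two vertices in the neighborhood of a connected set `C` are joined by an induced path all of
whose inner vertices lie in `C`. -/
lemma exists_induced_path_through {V : Type} {G : SimpleGraph V} {C : Set V} {a b : V}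
    (hC : (G.induce C).Connected) (ha : a ∈ nbhd G C) (hb : b ∈ nbhd G C) :
    ∃ p : G.Walk a b, p.IsPath ∧ (∀ v ∈ p.support, v ∈ C ∨ v = a ∨ v = b) ∧
      ∀ u ∈ p.support, ∀ w ∈ p.support, G.Adj u w → s(u, w) ∈ p.edges := by
  classical
  obtain ⟨-, x, hx, hxa⟩ := ha
  obtain ⟨-, y, hy, hyb⟩ := hb
  let X : Set V := {v | v ∈ C ∨ v = a ∨ v = b}
  obtain ⟨r⟩ := hC.preconnected ⟨x, hx⟩ ⟨y, hy⟩
  have hex : ∃ n, ∃ p : G.Walk a b, (∀ v ∈ p.support, v ∈ X) ∧ p.length = n := by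
    let r' : G.Walk x y := r.map (SimpleGraph.Embedding.induce C).toHom
    have hr' : ∀ v ∈ r'.support, v ∈ C := by
      intro v hv
      obtain ⟨z, -, rfl⟩ :=
        List.mem_map.mp ((congrArg (v ∈ ·) (SimpleGraph.Walk.support_map _ r)).mp hv)
      exact z.2
    refine ⟨_, .cons hxa.symm (r'.append (.cons hyb .nil)), fun v hv ↦ ?_, rfl⟩
    simp only [SimpleGraph.Walk.support_cons, SimpleGraph.Walk.mem_support_append_iff,
      SimpleGraph.Walk.support_nil, List.mem_cons, List.not_mem_nil, or_false] at hv
    rcases hv with rfl | h | rfl | rfl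
    · exact .inr (.inl rfl)
    · exact .inl (hr' v h)
    · exact .inl hy
    · exact .inr (.inr rfl)
  obtain ⟨p, hpX, hp⟩ := Nat.find_spec hex
  have hmin : ∀ q : G.Walk a b, (∀ v ∈ q.support, v ∈ X) → p.length ≤ q.length :=
    fun q hq ↦ hp ▸ Nat.find_min' hex ⟨q, hq, rfl⟩
  have hbyp : p.bypass = p := p.bypass_eq_self_of_length_le_length_bypass
    (hmin _ fun v hv ↦ hpX v (p.support_bypass_subset_support hv))
  exact ⟨p, hbyp ▸ p.bypass_isPath, hpX,
    fun u hu w hw ↦ mem_edges_of_shortest_walk hpX hmin hu hw⟩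

/-- Distinct components of `G` minus `S` are disjoint. -/
lemma IsCompOf.disjoint {V : Type} {G : SimpleGraph V} {S C D : Set V}
    (hC : IsCompOf G S C) (hD : IsCompOf G S D) (hne : C ≠ D) : Disjoint C D := by
  by_contra h
  have hconn := SimpleGraph.induce_union_connected hC.2.2.1.preconnected hD.2.2.1.preconnected
    (Set.not_disjoint_iff_nonempty_inter.mp h)
  have hdisj : Disjoint (C ∪ D) S := hC.2.1.union_left hD.2.1
  exact hne ((hC.2.2.2 _ Set.subset_union_left hdisj hconn).symm.trans
    (hD.2.2.2 _ Set.subset_union_right hdisj hconn))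

/-- Dirac: every minimal separator of a chordal graph is a clique. -/
theorem IsChordal.isClique_of_isMinSep {V : Type} {G : SimpleGraph V} (hG : IsChordal G)
    {S : Set V} (hS : IsMinSep G S) : G.IsClique S := by
  obtain ⟨C, D, ⟨hC, hCS⟩, ⟨hD, hDS⟩, hne⟩ := hS
  intro a ha b hb hab
  by_contra hnadj
  have hCD := Set.disjoint_left.mp (hC.disjoint hD hne)
  have hSD : ∀ v ∈ S, v ∉ D := fun v hv h ↦ Set.disjoint_left.mp hD.2.1 h hv
  have hnoedge : ∀ u ∈ C, ∀ w ∈ D, ¬ G.Adj u w := fun u hu w hw h ↦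
    hSD w (hCS ▸ ⟨fun hwC ↦ hCD hwC hw, u, hu, h⟩) hw
  obtain ⟨p, hp, hpC, hpind⟩ := exists_induced_path_through hC.2.2.1 (hCS ▸ ha) (hCS ▸ hb)
  obtain ⟨q, hq, hqD, hqind⟩ := exists_induced_path_through hD.2.2.1 (hDS ▸ ha) (hDS ▸ hb)
  have two_le_length : ∀ r : G.Walk a b, 2 ≤ r.length := by
    intro r
    have h0 : r.length ≠ 0 := fun h ↦ hab (SimpleGraph.Walk.eq_of_length_eq_zero h)
    have h1 : r.length ≠ 1 := fun h ↦ hnadj (SimpleGraph.Walk.adj_of_length_eq_one h)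
    omega
  have hp2 := two_le_length p
  have hq2 := two_le_length q
  have hcycle : (p.append q.reverse).IsCycle := by
    refine hp.isCycle_append hq.reverse (fun x hxp hxq ↦ ?_) (.inl hp2)
    have hxa : x ≠ a := by
      rintro rfl
      have := hp.support_nodup
      rw [← p.cons_tail_support] at this
      exact (List.nodup_cons.mp this).1 hxp
    have hxb : x ≠ b := by
      rintro rfl
      have := hq.reverse.support_nodup
      rw [← q.reverse.cons_tail_support] at this
      exact (List.nodup_cons.mp this).1 hxq
    have hxq' : x ∈ q.support := by simpa using List.mem_of_mem_tail hxq
    exact hCD ((hpC x (List.mem_of_mem_tail hxp)).resolve_right (by simp [hxa, hxb]))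
      ((hqD x hxq').resolve_right (by simp [hxa, hxb]))
  obtain ⟨u, w, hu, hw, huw, hedge⟩ := hG _ hcycle (by simp; omega)
  simp only [SimpleGraph.Walk.mem_support_append_iff, SimpleGraph.Walk.support_reverse,
    List.mem_reverse, SimpleGraph.Walk.edges_append, SimpleGraph.Walk.edges_reverse,
    List.mem_append, not_or] at hu hw hedge
  have hcross : ∀ x ∈ p.support, ∀ y ∈ q.support, G.Adj x y →
      s(x, y) ∈ p.edges ∨ s(x, y) ∈ q.edges := by
    intro x hx y hy hxy
    rcases hpC x hx with hxC | hxab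
    · rcases hqD y hy with hyD | hyab
      · exact absurd hxy (hnoedge x hxC y hyD)
      · exact .inl (hpind x hx y (by rcases hyab with rfl | rfl <;> simp) hxy)
    · exact .inr (hqind x (by rcases hxab with rfl | rfl <;> simp) y hy hxy)
  rcases hu with hu | hu <;> rcases hw with hw | hw
  · exact hedge.1 (hpind u hu w hw huw)
  · exact (hcross u hu w hw huw).elim hedge.1 hedge.2
  · rw [Sym2.eq_swap] at hedge
    exact (hcross w hw u hu huw.symm).elim hedge.1 hedge.2
  · exact hedge.2 (hqind u hu w hw huw)

/-- in a chordal graph, no two minimal separators cross each other. -/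
theorem chordal_minSeps_not_cross {V : Type} [Fintype V] (G : SimpleGraph V)
    (hG : IsChordal G) (S₁ S₂ : Set V) (h₁ : IsMinSep G S₁) (h₂ : IsMinSep G S₂) :
    ¬ Crosses G S₁ S₂ := by
  rintro ⟨a, b, ha, hb, haS, hbS, hsep⟩
  have hab : a ≠ b := by
    rintro rfl
    obtain ⟨v, hv, hvS⟩ := hsep .nil
    simp only [SimpleGraph.Walk.support_nil, List.mem_singleton] at hv
    exact haS (hv ▸ hvS)
  obtain ⟨v, hv, hvS⟩ := hsep (.cons (hG.isClique_of_isMinSep h₂ ha hb hab) .nil)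
  simp only [SimpleGraph.Walk.support_cons, SimpleGraph.Walk.support_nil, List.mem_cons,
    List.not_mem_nil, or_false] at hv
  rcases hv with rfl | rfl
  · exact haS hvS
  · exact hbS hvS
end

section
/- If H is a minimal triangulation of a finite simple graph G, then the set of all minimal separators of H is a maximal set of mutually non-crossing minimal separators of G; that is, every minimal separator of H is a minimal separator of G, no two of them cross each other, and no minimal separator of G outside this set can be added while keeping the set pairwise non-crossing. -/
open SimpleGraph

section Components

variable {V : Type} {G : SimpleGraph V} {S C D : Set V}

/-- A walk that leaves a set passes through its neighborhood. -/
theorem exists_mem_support_mem_nbhd {a b : V} (p : G.Walk a b) (ha : a ∈ C) (hb : b ∉ C) :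
    ∃ x ∈ p.support, x ∈ nbhd G C := by
  obtain ⟨d, hd, hfst, hsnd⟩ := p.exists_boundary_dart C ha hb
  exact ⟨d.snd, p.dart_snd_mem_support_of_mem_darts hd, hsnd, d.fst, hfst, d.adj⟩

/-- Two vertices of a set inducing a connected subgraph are joined by a walk inside that set. -/
theorem exists_walk_support_subset (hC : (G.induce C).Connected) {a b : V} (ha : a ∈ C)
    (hb : b ∈ C) : ∃ p : G.Walk a b, ∀ x ∈ p.support, x ∈ C := by
  obtain ⟨p⟩ := hC.preconnected ⟨a, ha⟩ ⟨b, hb⟩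
  refine ⟨p.map (Embedding.induce C).toHom, fun x hx => ?_⟩
  have hx' : x ∈ p.support.map (Embedding.induce (G := G) C).toHom := by
    rw [← Walk.support_map]
    exact hx
  obtain ⟨y, -, rfl⟩ := List.mem_map.1 hx'
  exact y.2

/-- A connected set avoiding the neighborhood of a set it meets is contained in that set. -/
theorem subset_of_connected_of_nbhd_subset (hC : (G.induce C).Connected) (hCS : Disjoint C S)
    (hD : nbhd G D ⊆ S) {v : V} (hvC : v ∈ C) (hvD : v ∈ D) : C ⊆ D := by
  intro w hw
  by_contra hwD
  obtain ⟨p, hp⟩ := exists_walk_support_subset hC hvC hw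
  obtain ⟨x, hx, hxD⟩ := exists_mem_support_mem_nbhd p hvD hwD
  exact Set.disjoint_left.1 hCS (hp x hx) (hD hxD)

theorem isCompOf_iff :
    IsCompOf G S C ↔
      C.Nonempty ∧ Disjoint C S ∧ (G.induce C).Connected ∧ nbhd G C ⊆ S := by
  refine and_congr_right fun hne => and_congr_right fun hdis => and_congr_right fun hconn =>
    ⟨fun hmax v hv => ?_, fun hsub D hCD hDS hD => ?_⟩
  · obtain ⟨hvC, u, hu, huv⟩ := hv
    by_contra hvS
    refine hvC ?_
    rw [← hmax (C ∪ {v}) Set.subset_union_left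
      (Set.disjoint_union_left.2 ⟨hdis, Set.disjoint_singleton_left.2 hvS⟩)
      (connected_induce_union hconn.preconnected Preconnected.of_subsingleton hu
        (Set.mem_singleton v) huv)]
    exact Or.inr rfl
  · obtain ⟨v, hv⟩ := hne
    exact (subset_of_connected_of_nbhd_subset hD hDS hsub (hCD hv) hv).antisymm hCD

theorem IsCompOf.eq_of_mem (hC : IsCompOf G S C) (hD : IsCompOf G S D) {v : V} (hvC : v ∈ C)
    (hvD : v ∈ D) : C = D := by
  rw [isCompOf_iff] at hC hD
  exact (subset_of_connected_of_nbhd_subset hC.2.2.1 hC.2.1 hD.2.2.2 hvC hvD).antisymm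
    (subset_of_connected_of_nbhd_subset hD.2.2.1 hD.2.1 hC.2.2.2 hvD hvC)

/-- Every vertex outside `S` lies in a component of `G` minus `S`. -/
theorem exists_isCompOf_mem {v : V} (hv : v ∉ S) : ∃ C, IsCompOf G S C ∧ v ∈ C := by
  let C : Set V := {w | ∃ p : G.Walk v w, ∀ x ∈ p.support, x ∉ S}
  have hvC : v ∈ C := ⟨Walk.nil, by simpa using hv⟩
  refine ⟨C, isCompOf_iff.2 ⟨⟨v, hvC⟩, ?_, ?_, ?_⟩, hvC⟩
  · exact Set.disjoint_left.2 fun w ⟨p, hp⟩ => hp w p.end_mem_support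
  · refine induce_connected_of_patches v hvC fun {w} ⟨p, hp⟩ => ?_
    classical
    exact ⟨{x | x ∈ p.support},
      fun x hx => ⟨p.takeUntil x hx, fun y hy => hp y (p.support_takeUntil_subset_support hx hy)⟩,
      p.start_mem_support, p.end_mem_support, p.connected_induce_support.preconnected _ _⟩
  · rintro w ⟨hwC, u, ⟨p, hp⟩, huw⟩
    by_contra hwS
    refine hwC ⟨p.concat huw, fun x hx => ?_⟩
    rw [Walk.support_concat, List.mem_append, List.mem_singleton] at hx
    obtain hx | rfl := hx
    exacts [hp x hx, hwS]

end Components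

section Chordal

variable {V : Type} {G H : SimpleGraph V} {S A : Set V}

/-- A walk of minimal length among those staying in `A` has no shortcut edge. -/
theorem SimpleGraph.Walk.mem_edges_of_append_of_minimal {x y u w : V} {p : G.Walk x y}
    (hpA : ∀ z ∈ p.support, z ∈ A)
    (hmin : ∀ q : G.Walk x y, (∀ z ∈ q.support, z ∈ A) → p.length ≤ q.length)
    (h : G.Adj u w) {p₁ : G.Walk x u} {p₂ : G.Walk u w} {p₃ : G.Walk w y}
    (hp : p = p₁.append (p₂.append p₃)) : s(u, w) ∈ p.edges := by
  have hlen := hmin (p₁.append (Walk.cons h p₃)) fun z hz => hpA z <| by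
    rw [hp]
    simp only [Walk.mem_support_append_iff, Walk.support_cons, List.mem_cons] at hz ⊢
    obtain hz | rfl | hz := hz
    exacts [Or.inl hz, Or.inl p₁.end_mem_support, Or.inr (Or.inr hz)]
  rw [hp] at hlen
  simp only [Walk.length_append, Walk.length_cons] at hlen
  match p₂, hp with
  | .nil, _ => exact absurd h G.irrefl
  | .cons h' .nil, hp => simp [hp]
  | .cons _ (.cons _ _), _ => simp only [Walk.length_cons] at hlen; omega

/-- Two vertices of `A` joined by a walk in `A` are joined by an induced path in `A`. -/
theorem exists_induced_path {x y : V} (hA : ∃ p : G.Walk x y, ∀ z ∈ p.support, z ∈ A) :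
    ∃ p : G.Walk x y, p.IsPath ∧ (∀ z ∈ p.support, z ∈ A) ∧
      ∀ u ∈ p.support, ∀ w ∈ p.support, G.Adj u w → s(u, w) ∈ p.edges := by
  classical
  obtain ⟨p, hpA, hmin⟩ : ∃ p : G.Walk x y, (∀ z ∈ p.support, z ∈ A) ∧
      ∀ q : G.Walk x y, (∀ z ∈ q.support, z ∈ A) → p.length ≤ q.length := by
    let P : Set (G.Walk x y) := {p | ∀ z ∈ p.support, z ∈ A}
    have hP : P.Nonempty := hA
    exact ⟨Function.argminOn Walk.length P hP, Function.argminOn_mem Walk.length P hP,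
      fun q hq => Function.argminOn_le Walk.length P hq⟩
  refine ⟨p, ?_, hpA, fun u hu w hw h => ?_⟩
  · rw [← p.bypass_eq_self_of_length_le_length_bypass
      (hmin _ fun z hz => hpA z (p.support_bypass_subset_support hz))]
    exact p.bypass_isPath
  · have hw' := hw
    rw [← p.take_spec hu, Walk.mem_support_append_iff] at hw'
    obtain hw' | hw' := hw'
    · rw [Sym2.eq_swap]
      refine Walk.mem_edges_of_append_of_minimal hpA hmin h.symm
        (p₁ := (p.takeUntil u hu).takeUntil w hw') (p₂ := (p.takeUntil u hu).dropUntil w hw')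
        (p₃ := p.dropUntil u hu) ?_
      rw [Walk.append_assoc, Walk.take_spec, Walk.take_spec]
    · refine Walk.mem_edges_of_append_of_minimal hpA hmin h
        (p₁ := p.takeUntil u hu) (p₂ := (p.dropUntil u hu).takeUntil w hw')
        (p₃ := (p.dropUntil u hu).dropUntil w hw') ?_
      rw [Walk.take_spec, Walk.take_spec]

/-- Two vertices of the neighborhood of a connected set are joined by an induced path whose
interior lies in that set. -/
theorem exists_induced_path_of_mem_nbhd {C : Set V} (hC : (G.induce C).Connected) {x y : V}
    (hx : x ∈ nbhd G C) (hy : y ∈ nbhd G C) :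
    ∃ p : G.Walk x y, p.IsPath ∧ (∀ z ∈ p.support, z = x ∨ z = y ∨ z ∈ C) ∧
      ∀ u ∈ p.support, ∀ w ∈ p.support, G.Adj u w → s(u, w) ∈ p.edges := by
  obtain ⟨-, a, ha, hax⟩ := hx
  obtain ⟨-, b, hb, hby⟩ := hy
  obtain ⟨p, hp⟩ := exists_walk_support_subset hC ha hb
  refine exists_induced_path (A := {z | z = x ∨ z = y ∨ z ∈ C})
    ⟨Walk.cons hax.symm (p.concat hby), fun z hz => ?_⟩
  rw [Walk.support_cons, Walk.support_concat, List.mem_cons, List.mem_append,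
    List.mem_singleton] at hz
  obtain rfl | hz | rfl := hz
  exacts [Or.inl rfl, Or.inr (Or.inr (hp z hz)), Or.inr (Or.inl rfl)]

theorem SimpleGraph.Walk.one_lt_length_of_not_adj {x y : V} (p : G.Walk x y) (hne : x ≠ y)
    (h : ¬ G.Adj x y) : 1 < p.length := by
  match p with
  | .nil => exact absurd rfl hne
  | .cons h' .nil => exact absurd h' h
  | .cons _ (.cons _ _) => simp only [Walk.length_cons]; omega

/-- Dirac's theorem: minimal separators of chordal graphs are cliques. -/
theorem IsChordal.isClique_of_isMinSep_s8 (hH : IsChordal H) (hS : IsMinSep H S) :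
    H.IsClique S := by
  obtain ⟨C, D, ⟨hC, hCS⟩, ⟨hD, hDS⟩, hCD⟩ := hS
  intro x hx y hy hne
  by_contra hxy
  have hdisj : ∀ z ∈ C, z ∉ D := fun z hzC hzD => hCD (hC.eq_of_mem hD hzC hzD)
  have hCS' : ∀ z ∈ C, z ∉ S := fun _ hz => Set.disjoint_left.1 hC.2.1 hz
  have hDS' : ∀ z ∈ D, z ∉ S := fun _ hz => Set.disjoint_left.1 hD.2.1 hz
  have hnadj : ∀ u ∈ C, ∀ w ∈ D, ¬ H.Adj u w := fun u hu w hw h =>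
    hDS' w hw (hCS ▸ ⟨fun hwC => hdisj w hwC hw, u, hu, h⟩)
  obtain ⟨p, hp, hpC, hpe⟩ :=
    exists_induced_path_of_mem_nbhd hC.2.2.1 (hCS.symm ▸ hx) (hCS.symm ▸ hy)
  obtain ⟨q, hq, hqD, hqe⟩ :=
    exists_induced_path_of_mem_nbhd hD.2.2.1 (hDS.symm ▸ hy) (hDS.symm ▸ hx)
  have hpl := p.one_lt_length_of_not_adj hne hxy
  have hql := q.one_lt_length_of_not_adj hne.symm fun h => hxy h.symm
  have htail : p.support.tail.Disjoint q.support.tail := by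
    intro z hzp hzq
    have hzx : z ≠ x := by
      rintro rfl
      have := hp.support_nodup
      rw [← p.cons_tail_support, List.nodup_cons] at this
      exact this.1 hzp
    have hzy : z ≠ y := by
      rintro rfl
      have := hq.support_nodup
      rw [← q.cons_tail_support, List.nodup_cons] at this
      exact this.1 hzq
    have hzC := hpC z (List.mem_of_mem_tail hzp)
    have hzD := hqD z (List.mem_of_mem_tail hzq)
    have := hdisj z
    tauto
  obtain ⟨u, w, hu, hw, huw, hnot⟩ := hH (p.append q) (hp.isCycle_append hq htail (Or.inl hpl))
    (by rw [Walk.length_append]; omega)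
  rw [Walk.edges_append, List.mem_append, not_or] at hnot
  have hnp : ¬ (u ∈ p.support ∧ w ∈ p.support) := fun h => hnot.1 (hpe u h.1 w h.2 huw)
  have hnq : ¬ (u ∈ q.support ∧ w ∈ q.support) := fun h => hnot.2 (hqe u h.1 w h.2 huw)
  have hp_only : ∀ z ∈ p.support, z ∉ q.support → z ∈ C := by
    intro z hz hzq
    obtain rfl | rfl | hz := hpC z hz
    exacts [absurd q.end_mem_support hzq, absurd q.start_mem_support hzq, hz]
  have hq_only : ∀ z ∈ q.support, z ∉ p.support → z ∈ D := by
    intro z hz hzp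
    obtain rfl | rfl | hz := hqD z hz
    exacts [absurd p.end_mem_support hzp, absurd p.start_mem_support hzp, hz]
  rw [Walk.mem_support_append_iff] at hu hw
  by_cases hup : u ∈ p.support
  · have hwp : w ∉ p.support := fun h => hnp ⟨hup, h⟩
    have hwq := hw.resolve_left hwp
    exact hnadj u (hp_only u hup fun h => hnq ⟨h, hwq⟩) w (hq_only w hwq hwp) huw
  · have huq := hu.resolve_left hup
    have hwq : w ∉ q.support := fun h => hnq ⟨huq, h⟩
    exact hnadj w (hp_only w (hw.resolve_right hwq) hwq) u (hq_only u huq hup) huw.symm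

/-- The graph obtained from `H` by deleting all edges between `A` and the complement of
`A ∪ S`. -/
def cutEdges (H : SimpleGraph V) (A S : Set V) : SimpleGraph V where
  Adj u w := H.Adj u w ∧ (u ∈ A → w ∈ A ∪ S) ∧ (w ∈ A → u ∈ A ∪ S)
  symm := ⟨fun _ _ h => ⟨h.1.symm, h.2.2, h.2.1⟩⟩
  loopless := ⟨fun _ h => h.1.ne rfl⟩

theorem cutEdges_le : cutEdges H A S ≤ H := fun _ _ h => h.1

theorem nbhd_cutEdges_subset : nbhd (cutEdges H A S) A ⊆ S := by
  rintro w ⟨hwA, u, hu, -, h, -⟩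
  exact (h hu).resolve_left hwA

/-- A cycle of `cutEdges H A S` through `A` and through the complement of `A ∪ S` has a chord
in the clique `S`. -/
theorem exists_chord_cutEdges (hS : H.IsClique S) (hAS : Disjoint A S) {v u w : V}
    (c : (cutEdges H A S).Walk v v) (hc : c.IsCycle) (hu : u ∈ c.support) (hw : w ∈ c.support)
    (huA : u ∈ A) (hwA : w ∉ A) (hwS : w ∉ S) :
    ∃ s t : V, s ∈ c.support ∧ t ∈ c.support ∧ (cutEdges H A S).Adj s t ∧
      s(s, t) ∉ c.edges := by
  classical
  have hmem : ∀ z, z ∈ (c.rotate u hu).support ↔ z ∈ c.support :=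
    fun z => c.mem_support_rotate_iff u hu
  have hedges : ∀ e, e ∈ (c.rotate u hu).edges ↔ e ∈ c.edges :=
    fun e => (c.rotate_edges u hu).mem_iff
  have hc' : (c.rotate u hu).IsCycle := hc.rotate hu
  generalize c.rotate u hu = d at hmem hedges hc'
  have hwd : w ∈ d.support := (hmem w).2 hw
  obtain ⟨p, q, rfl⟩ : ∃ (p : (cutEdges H A S).Walk u w) (q : (cutEdges H A S).Walk w u),
      d = p.append q := ⟨_, _, (d.take_spec hwd).symm⟩
  obtain ⟨s, hs, hsA⟩ := exists_mem_support_mem_nbhd p huA hwA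
  obtain ⟨t, ht, htA⟩ := exists_mem_support_mem_nbhd q.reverse huA hwA
  rw [Walk.support_reverse, List.mem_reverse] at ht
  have hsS := nbhd_cutEdges_subset hsA
  have htS := nbhd_cutEdges_subset htA
  have hdisj : ∀ z ∈ S, z ∈ p.support → z ∉ q.support := by
    intro z hz hzp hzq
    have hzu : z ≠ u := by rintro rfl; exact Set.disjoint_left.1 hAS huA hz
    have hzw : z ≠ w := by rintro rfl; exact hwS hz
    have hnd := hc'.support_nodup
    rw [Walk.tail_support_append, List.nodup_append'] at hnd
    rw [Walk.mem_support_iff] at hzp hzq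
    exact hnd.2.2 (hzp.resolve_left hzu) (hzq.resolve_left hzw)
  have hst : s ≠ t := by rintro rfl; exact hdisj s hsS hs ht
  refine ⟨s, t, (hmem s).1 ?_, (hmem t).1 ?_, ⟨hS hsS htS hst, fun _ => Or.inr htS,
    fun _ => Or.inr hsS⟩, fun he => ?_⟩
  · exact (Walk.mem_support_append_iff p q).2 (Or.inl hs)
  · exact (Walk.mem_support_append_iff p q).2 (Or.inr ht)
  · rw [← hedges, Walk.edges_append, List.mem_append] at he
    obtain he | he := he
    · exact hdisj t htS (p.snd_mem_support_of_mem_edges he) ht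
    · exact hdisj s hsS hs (q.fst_mem_support_of_mem_edges he)

theorem IsChordal.cutEdges (hH : IsChordal H) (hS : H.IsClique S) (hAS : Disjoint A S) :
    IsChordal (cutEdges H A S) := by
  intro v c hc hlen
  obtain ⟨u, w, hu, hw, huw, hnot⟩ := hH (c.mapLe cutEdges_le) (hc.mapLe cutEdges_le)
    (by simpa using hlen)
  rw [Walk.support_mapLe_eq_support] at hu hw
  rw [Walk.edges_mapLe_eq_edges] at hnot
  by_cases h₁ : u ∈ A ∧ w ∉ A ∪ S
  · exact exists_chord_cutEdges hS hAS c hc hu hw h₁.1 (fun h => h₁.2 (Or.inl h))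
      fun h => h₁.2 (Or.inr h)
  by_cases h₂ : w ∈ A ∧ u ∉ A ∪ S
  · exact exists_chord_cutEdges hS hAS c hc hw hu h₂.1 (fun h => h₂.2 (Or.inl h))
      fun h => h₂.2 (Or.inr h)
  exact ⟨u, w, hu, hw, ⟨huw, fun h => not_not.1 fun h' => h₁ ⟨h, h'⟩,
    fun h => not_not.1 fun h' => h₂ ⟨h, h'⟩⟩, hnot⟩

end Chordal

section MinimalTriangulation

variable {V : Type} {G H : SimpleGraph V} {S A C : Set V}

theorem nbhd_mono (h : G ≤ H) (C : Set V) : nbhd G C ⊆ nbhd H C :=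
  fun _ ⟨hv, u, hu, huv⟩ => ⟨hv, u, hu, h huv⟩

/-- In a minimal triangulation, a clique containing the `G`-neighborhood of a set disjoint from it
also contains its `H`-neighborhood. -/
theorem IsMinimalTriangulationOf.nbhd_subset (hH : IsMinimalTriangulationOf H G)
    (hS : H.IsClique S) (hAS : Disjoint A S) (hA : nbhd G A ⊆ S) : nbhd H A ⊆ S := by
  have hG : G ≤ cutEdges H A S := by
    refine fun u w h => ⟨hH.1.2 h, fun hu => ?_, fun hw => ?_⟩
    · exact or_iff_not_imp_left.2 fun hw => hA ⟨hw, u, hu, h⟩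
    · exact or_iff_not_imp_left.2 fun hu => hA ⟨hu, w, hw, h.symm⟩
  rw [← hH.2 (cutEdges H A S) ⟨hH.1.1.cutEdges hS hAS, hG⟩ cutEdges_le]
  exact nbhd_cutEdges_subset

theorem IsMinimalTriangulationOf.isCompOf (hH : IsMinimalTriangulationOf H G)
    (hS : H.IsClique S) (hC : IsCompOf G S C) : IsCompOf H S C := by
  rw [isCompOf_iff] at hC ⊢
  exact ⟨hC.1, hC.2.1, hC.2.2.1.mono fun _ _ h => hH.1.2 h, hH.nbhd_subset hS hC.2.1 hC.2.2.2⟩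

theorem IsMinimalTriangulationOf.isFullCompOf_iff (hH : IsMinimalTriangulationOf H G)
    (hS : H.IsClique S) : IsFullCompOf H S C ↔ IsFullCompOf G S C := by
  constructor
  · rintro ⟨hC, hCS⟩
    obtain ⟨v, hv⟩ := hC.1
    obtain ⟨C', hC', hvC'⟩ := exists_isCompOf_mem (G := G) (Set.disjoint_left.1 hC.2.1 hv)
    obtain rfl := hC.eq_of_mem (hH.isCompOf hS hC') hv hvC'
    have hsub : nbhd G C ⊆ S := (isCompOf_iff.1 hC').2.2.2
    refine ⟨hC', hsub.antisymm ?_⟩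
    conv_lhs => rw [← hCS]
    exact hH.nbhd_subset (hS.subset hsub) (hC.2.1.mono_right hsub) subset_rfl
  · rintro ⟨hC, hCS⟩
    have hC' := hH.isCompOf hS hC
    exact ⟨hC', (isCompOf_iff.1 hC').2.2.2.antisymm
      (hCS.symm.subset.trans (nbhd_mono hH.1.2 C))⟩

theorem IsMinimalTriangulationOf.isMinSep_iff (hH : IsMinimalTriangulationOf H G)
    (hS : H.IsClique S) : IsMinSep H S ↔ IsMinSep G S := by
  simp only [IsMinSep, hH.isFullCompOf_iff hS]

/-- Two distinct nonadjacent vertices are separated by a minimal separator. -/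
theorem exists_isMinSep_separates {x y : V} (hne : x ≠ y) (hxy : ¬ H.Adj x y) :
    ∃ R, IsMinSep H R ∧ Separates H R x y := by
  obtain ⟨D, hD, hyD⟩ := exists_isCompOf_mem (G := H) (S := H.neighborSet x) (v := y) hxy
  rw [isCompOf_iff] at hD
  obtain ⟨-, hDdis, hDconn, hDsub⟩ := hD
  have hxD : x ∉ D := by
    intro hxD
    obtain ⟨p, hp⟩ := exists_walk_support_subset hDconn hxD hyD
    obtain ⟨z, hz, -, x', rfl, hxz⟩ := exists_mem_support_mem_nbhd (C := {x}) p rfl hne.symm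
    exact Set.disjoint_left.1 hDdis (hp z hz) hxz
  have hxR : x ∉ nbhd H D := fun h => H.irrefl (hDsub h)
  have hyR : y ∉ nbhd H D := fun h => h.1 hyD
  have hDcomp : IsCompOf H (nbhd H D) D :=
    isCompOf_iff.2 ⟨⟨y, hyD⟩, Set.disjoint_left.2 fun _ h h' => h'.1 h, hDconn, subset_rfl⟩
  obtain ⟨C, hC, hxC⟩ := exists_isCompOf_mem (G := H) hxR
  refine ⟨nbhd H D, ⟨C, D, ⟨hC, ?_⟩, ⟨hDcomp, rfl⟩, ?_⟩, hxR, hyR, fun p => ?_⟩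
  · exact (isCompOf_iff.1 hC).2.2.2.antisymm fun r hr =>
      ⟨Set.disjoint_right.1 hC.2.1 hr, x, hxC, hDsub hr⟩
  · rintro rfl
    exact hxD hxC
  · obtain ⟨z, hz, hzD⟩ := exists_mem_support_mem_nbhd p.reverse hyD hxD
    exact ⟨z, by simpa using hz, hzD⟩

theorem Separates.mono {a b : V} (h : G ≤ H) (hs : Separates H S a b) : Separates G S a b :=
  ⟨hs.1, hs.2.1, fun p => by simpa using hs.2.2 (p.mapLe h)⟩

end MinimalTriangulation

/-- the minimal separators of a minimal triangulation `H` of `G` form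
a maximal set of pairwise non-crossing minimal separators of `G`. -/
theorem minSeps_of_minimalTriangulation_maximal {V : Type} [Fintype V]
    (G H : SimpleGraph V) (hH : IsMinimalTriangulationOf H G) :
    (∀ S : Set V, IsMinSep H S → IsMinSep G S) ∧
    (∀ S R : Set V, IsMinSep H S → IsMinSep H R → ¬ Crosses G S R) ∧
    (∀ S : Set V, IsMinSep G S → ¬ IsMinSep H S →
      ∃ R : Set V, IsMinSep H R ∧ (Crosses G S R ∨ Crosses G R S)) := by
  refine ⟨fun S hS => (hH.isMinSep_iff (hH.1.1.isClique_of_isMinSep_s8 hS)).1 hS, ?_, ?_⟩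
  · rintro S R hS hR ⟨a, b, ha, hb, haS, hbS, hsep⟩
    have hab : a ≠ b := by
      rintro rfl
      obtain ⟨v, hv, hvS⟩ := hsep Walk.nil
      rw [Walk.support_nil, List.mem_singleton] at hv
      exact haS (hv ▸ hvS)
    have hadj : H.Adj a b := hH.1.1.isClique_of_isMinSep_s8 hR ha hb hab
    obtain ⟨C, hC, haC⟩ := exists_isCompOf_mem (G := G) haS
    have hCH := (isCompOf_iff.1 (hH.isCompOf (hH.1.1.isClique_of_isMinSep_s8 hS) hC)).2.2.2
    have hbC : b ∈ C := by
      by_contra hbC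
      exact hbS (hCH ⟨hbC, a, haC, hadj⟩)
    obtain ⟨p, hp⟩ := exists_walk_support_subset hC.2.2.1 haC hbC
    obtain ⟨v, hv, hvS⟩ := hsep p
    exact Set.disjoint_left.1 hC.2.1 (hp v hv) hvS
  · intro S hS hSH
    have hclique : ¬ H.IsClique S := fun h => hSH ((hH.isMinSep_iff h).2 hS)
    obtain ⟨x, hx, y, hy, hne, hxy⟩ : ∃ x ∈ S, ∃ y ∈ S, x ≠ y ∧ ¬ H.Adj x y := by
      by_contra! h
      exact hclique fun x hx y hy hne => h x hx y hy hne
    obtain ⟨R, hR, hsep⟩ := exists_isMinSep_separates hne hxy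
    exact ⟨R, hR, Or.inr ⟨x, y, hx, hy, hsep.mono hH.1.2⟩⟩
end

section
/- Let S be a clique minimal separator of a finite simple graph G. Then tw(G) equals the maximum of tw(G[C ∪ N_G(C)]) over all connected components C of G minus S. -/
namespace SimpleGraph

/-- A map sending adjacent vertices to mutually reachable ones preserves reachability. -/
theorem Reachable.map_of_adj {α β : Type*} {G : SimpleGraph α} {H : SimpleGraph β} (f : α → β)
    (hf : ∀ u v, G.Adj u v → H.Reachable (f u) (f v)) {u v : α} (h : G.Reachable u v) :
    H.Reachable (f u) (f v) := by
  obtain ⟨p⟩ := h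
  induction p with
  | nil => rfl
  | cons h _ ih => exact (hf _ _ h).trans ih

/-- A walk entering a set `A` from outside has a first edge crossing into `A`. -/
theorem Walk.exists_first_entry {α : Type*} {T : SimpleGraph α} {A : Set α} {i w : α}
    (p : T.Walk i w) (hi : i ∉ A) (hw : w ∈ A) :
    ∃ a j, a ∉ A ∧ j ∈ A ∧ T.Adj a j ∧ (T.deleteEdges {s(a, j)}).Reachable i a := by
  induction p with
  | nil => exact absurd hw hi
  | @cons u v w h p ih =>
    by_cases hv : v ∈ A
    · exact ⟨u, v, hi, hv, h, .rfl⟩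
    · obtain ⟨a, j, ha, hj, haj, hr⟩ := ih hv hw
      refine ⟨a, j, ha, hj, haj, Reachable.trans (Adj.reachable ?_) hr⟩
      simp only [deleteEdges_adj, Set.mem_singleton_iff, Sym2.eq_iff]
      exact ⟨h, by grind⟩

/-- In a tree, a connected set `A` has a gate towards each outside vertex `i`: it lies in every
connected set that contains `i` and meets `A`. -/
theorem IsTree.exists_gate {α : Type*} {T : SimpleGraph α} (hT : T.IsTree) {A : Set α}
    (hA : (T.induce A).Connected) {i : α} (hi : i ∉ A) :
    ∃ j ∈ A, ∀ B : Set α, (T.induce B).Preconnected → i ∈ B → (A ∩ B).Nonempty → j ∈ B := by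
  obtain ⟨⟨w, hw⟩⟩ := hA.nonempty
  obtain ⟨p⟩ := hT.connected.preconnected i w
  obtain ⟨a, j, ha, hj, haj, hr⟩ := p.exists_first_entry hi hw
  refine ⟨j, hj, fun B hB hiB ⟨x, hxA, hxB⟩ => ?_⟩
  by_contra hjB
  refine isAcyclic_iff_forall_adj_isBridge.1 hT.isAcyclic haj (hr.symm.trans (.trans (v := x) ?_ ?_))
  · refine Reachable.map_of_adj (fun z : B => (z : α)) (fun u v huv => Adj.reachable ?_)
      (hB ⟨i, hiB⟩ ⟨x, hxB⟩)
    have := u.2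
    have := v.2
    simp only [deleteEdges_adj, Set.mem_singleton_iff, Sym2.eq_iff]
    exact ⟨huv, by grind⟩
  · refine Reachable.map_of_adj (fun z : A => (z : α)) (fun u v huv => Adj.reachable ?_)
      (hA.preconnected ⟨x, hxA⟩ ⟨j, hj⟩)
    have := u.2
    have := v.2
    simp only [deleteEdges_adj, Set.mem_singleton_iff, Sym2.eq_iff]
    exact ⟨huv, by grind⟩

section Bouquet

variable {κ : Type*} {ι : κ → Type*} (T : ∀ c, SimpleGraph (ι c)) (r : ∀ c, ι c)

/-- Adjacency in the bouquet of the rooted graphs `(T c, r c)`. -/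
inductive BouquetAdj : Option (Σ c, ι c) → Option (Σ c, ι c) → Prop
  | edge {c : κ} {i j : ι c} (h : (T c).Adj i j) : BouquetAdj (some ⟨c, i⟩) (some ⟨c, j⟩)
  | up (c : κ) : BouquetAdj (some ⟨c, r c⟩) none
  | down (c : κ) : BouquetAdj none (some ⟨c, r c⟩)

/-- The disjoint union of the graphs `T c` together with a new vertex joined to each root `r c`. -/
def bouquet : SimpleGraph (Option (Σ c, ι c)) where
  Adj := BouquetAdj T r
  symm := ⟨by
    rintro _ _ (h | _ | _)
    · exact .edge h.symm
    · exact .down _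
    · exact .up _⟩
  loopless := ⟨by
    rintro _ (h | _ | _)
    exact h.ne rfl⟩

variable {T} in
theorem bouquet_adj_some {c : κ} {i j : ι c} (h : (T c).Adj i j) :
    (bouquet T r).Adj (some ⟨c, i⟩) (some ⟨c, j⟩) := .edge h

theorem bouquet_adj_none (c : κ) : (bouquet T r).Adj (some ⟨c, r c⟩) none := .up c

open Classical in
/-- The retraction of the bouquet onto its part `c`. -/
noncomputable def bouquetRetract (c : κ) : Option (Σ c, ι c) → ι c
  | none => r c
  | some x => if h : x.1 = c then h ▸ x.2 else r c

@[simp]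
theorem bouquetRetract_none (c : κ) : bouquetRetract r c none = r c := rfl

@[simp]
theorem bouquetRetract_self (c : κ) (i : ι c) : bouquetRetract r c (some ⟨c, i⟩) = i := by
  simp [bouquetRetract]

theorem bouquetRetract_of_ne {c d : κ} (h : d ≠ c) (i : ι d) :
    bouquetRetract r c (some ⟨d, i⟩) = r c := by
  simp [bouquetRetract, h]

theorem bouquetRetract_root (c d : κ) : bouquetRetract r c (some ⟨d, r d⟩) = r c := by
  by_cases h : d = c
  · subst h; simp
  · exact bouquetRetract_of_ne r h _

variable {T}

theorem bouquet_isTree (hT : ∀ c, (T c).IsTree) : (bouquet T r).IsTree where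
  connected := by
    have key : ∀ x, (bouquet T r).Reachable x none := by
      rintro (_ | ⟨c, i⟩)
      · rfl
      · refine Reachable.trans ?_ (bouquet_adj_none T r c).reachable
        exact Reachable.map_of_adj (fun i => some (⟨c, i⟩ : Σ c, ι c))
          (fun u v h => (bouquet_adj_some r h).reachable) ((hT c).connected.preconnected i (r c))
    exact { preconnected := fun x y => (key x).trans (key y).symm, nonempty := ⟨none⟩ }
  isAcyclic := by
    have root_bridge : ∀ c, (bouquet T r).IsBridge s(some ⟨c, r c⟩, none) := by
      intro c h
      have := Reachable.map_of_adj (H := (⊥ : SimpleGraph Prop))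
        (fun x : Option (Σ c, ι c) => ∃ i, x = some ⟨c, i⟩) ?_ h
      · simp at this
      · rintro _ _ ⟨h, hne⟩
        cases h with
        | @edge d i j h =>
          rw [reachable_bot]
          by_cases hd : d = c
          · subst hd; simp
          · simp [hd]
        | up d =>
          rw [reachable_bot]
          have : d ≠ c := by rintro rfl; simp at hne
          simp [this]
        | down d =>
          rw [reachable_bot]
          have : d ≠ c := by rintro rfl; simp at hne
          simp [this]
    rw [isAcyclic_iff_forall_adj_isBridge]
    rintro _ _ h
    cases h with
    | up c => exact root_bridge c
    | down c => rw [Sym2.eq_swap]; exact root_bridge c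
    | @edge c i j h =>
      intro hr
      have := Reachable.map_of_adj (H := (T c).deleteEdges {s(i, j)}) (bouquetRetract r c) ?_ hr
      · simp only [bouquetRetract_self] at this
        exact isAcyclic_iff_forall_adj_isBridge.1 (hT c).isAcyclic h this
      · rintro _ _ ⟨h, hne⟩
        cases h with
        | @edge d k l hkl =>
          by_cases hd : d = c
          · subst hd
            simp only [bouquetRetract_self]
            refine Adj.reachable ?_
            simp only [deleteEdges_adj, Set.mem_singleton_iff]
            refine ⟨hkl, fun he => hne ?_⟩
            simpa [hkl.ne] using he
          · simp [bouquetRetract_of_ne r hd]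
        | up d => simp [bouquetRetract_root]
        | down d => simp [bouquetRetract_root]

end Bouquet

end SimpleGraph

namespace TreeDecomp

open SimpleGraph

variable {V : Type} {G : SimpleGraph V}

/-- Every finite clique is contained in some bag. -/
theorem exists_bag_of_isClique {ι : Type} (td : TreeDecomp G ι) {K : Set V} (hfin : K.Finite)
    (hK : G.IsClique K) : ∃ i, K ⊆ td.bag i := by
  induction K, hfin using Set.Finite.induction_on with
  | empty =>
    obtain ⟨i⟩ := td.isTree.connected.nonempty
    exact ⟨i, Set.empty_subset _⟩
  | @insert v K hv _ ih =>
    obtain ⟨i, hi⟩ := ih (hK.subset (Set.subset_insert v K))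
    by_cases hvi : v ∈ td.bag i
    · exact ⟨i, Set.insert_subset hvi hi⟩
    · obtain ⟨j, hj, hgate⟩ := td.isTree.exists_gate (td.bags_connected v) (i := i) hvi
      refine ⟨j, Set.insert_subset hj fun u hu => ?_⟩
      refine hgate {i | u ∈ td.bag i} (td.bags_connected u).preconnected (hi hu) ?_
      exact td.edges_covered
        (hK (Set.mem_insert v K) (Set.mem_insert_of_mem v hu) (by rintro rfl; exact hv hu))

/-- The decomposition with a single bag. -/
def trivial [Fintype V] (G : SimpleGraph V) : TreeDecomp G Unit where
  tree := ⊥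
  isTree := .of_subsingleton
  bag _ := Finset.univ
  bags_cover v := ⟨(), Finset.mem_univ v⟩
  edges_covered u v _ := ⟨(), Finset.mem_univ u, Finset.mem_univ v⟩
  bags_connected v :=
    { preconnected := fun x y => by rw [Subsingleton.elim x y]
      nonempty := ⟨⟨(), Finset.mem_univ v⟩⟩ }

open Classical in
/-- The restriction of a tree-decomposition to an induced subgraph. -/
noncomputable def restrict {ι : Type} (td : TreeDecomp G ι) (U : Set V) :
    TreeDecomp (G.induce U) ι where
  tree := td.tree
  isTree := td.isTree
  bag i := (td.bag i).subtype (· ∈ U)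
  bags_cover v := by simpa using td.bags_cover v
  edges_covered u v h := by simpa using td.edges_covered h
  bags_connected v := by
    have h : {i | v ∈ (td.bag i).subtype (· ∈ U)} = {i | (v : V) ∈ td.bag i} := by
      ext i
      simp
    rw [h]
    exact td.bags_connected v

/-- Tree-decompositions of induced subgraphs that pairwise overlap within `S` are glued along a
new bag `S`. -/
def glue {κ : Type} {ι : κ → Type} {U : κ → Set V} (S : Finset V)
    (td : ∀ c, TreeDecomp (G.induce (U c)) (ι c)) (r : ∀ c, ι c)
    (hr : ∀ c (x : U c), (x : V) ∈ S → x ∈ (td c).bag (r c))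
    (hcover : ∀ v, v ∉ S → ∃ c, v ∈ U c)
    (hedge : ∀ u v, G.Adj u v → (u ∈ S ∧ v ∈ S) ∨ ∃ c, u ∈ U c ∧ v ∈ U c)
    (hinter : ∀ c d v, v ∈ U c → v ∈ U d → v ∉ S → c = d) :
    TreeDecomp G (Option (Σ c, ι c)) where
  tree := bouquet (fun c => (td c).tree) r
  isTree := bouquet_isTree r fun c => (td c).isTree
  bag
    | none => S
    | some x => ((td x.1).bag x.2).map (Function.Embedding.subtype _)
  bags_cover v := by
    by_cases hv : v ∈ S
    · exact ⟨none, hv⟩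
    · obtain ⟨c, hc⟩ := hcover v hv
      obtain ⟨i, hi⟩ := (td c).bags_cover ⟨v, hc⟩
      exact ⟨some ⟨c, i⟩, by simpa using ⟨hc, hi⟩⟩
  edges_covered u v h := by
    obtain ⟨hu, hv⟩ | ⟨c, hu, hv⟩ := hedge u v h
    · exact ⟨none, hu, hv⟩
    · obtain ⟨i, hi, hi'⟩ := (td c).edges_covered (u := ⟨u, hu⟩) (v := ⟨v, hv⟩) h
      exact ⟨some ⟨c, i⟩, by simpa using ⟨hu, hi⟩, by simpa using ⟨hv, hi'⟩⟩
  bags_connected v := by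
    set bag : Option (Σ c, ι c) → Finset V := fun x => match x with
      | none => S
      | some x => ((td x.1).bag x.2).map (Function.Embedding.subtype _) with hbag
    have mem_some : ∀ {c} (hc : v ∈ U c) (i : ι c), ⟨v, hc⟩ ∈ (td c).bag i →
        v ∈ bag (some ⟨c, i⟩) := fun hc i hi => by simpa [hbag] using ⟨hc, hi⟩
    change ((bouquet (fun c => (td c).tree) r).induce {x | v ∈ bag x}).Connected
    have part : ∀ {c} (hc : v ∈ U c) (i j : ι c) (hi : ⟨v, hc⟩ ∈ (td c).bag i)
        (hj : ⟨v, hc⟩ ∈ (td c).bag j),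
        ((bouquet (fun c => (td c).tree) r).induce {x | v ∈ bag x}).Reachable
          ⟨some ⟨c, i⟩, mem_some hc i hi⟩ ⟨some ⟨c, j⟩, mem_some hc j hj⟩ := fun {c} hc i j hi hj =>
      Reachable.map_of_adj (u := ⟨i, hi⟩) (v := ⟨j, hj⟩)
        (G := (td c).tree.induce {i | (⟨v, hc⟩ : U c) ∈ (td c).bag i})
        (fun k : {i | (⟨v, hc⟩ : U c) ∈ (td c).bag i} =>
          (⟨some ⟨c, k⟩, mem_some hc k k.2⟩ : {x | v ∈ bag x}))
        (fun _ _ h => Adj.reachable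
          (bouquet_adj_some (T := fun c => (td c).tree) r (induce_adj.1 h)))
        (((td c).bags_connected ⟨v, hc⟩).preconnected ⟨i, hi⟩ ⟨j, hj⟩)
    by_cases hv : v ∈ S
    · have key : ∀ x : {x | v ∈ bag x},
          ((bouquet (fun c => (td c).tree) r).induce {x | v ∈ bag x}).Reachable x ⟨none, hv⟩ := by
        rintro ⟨_ | ⟨c, i⟩, hx⟩
        · rfl
        · obtain ⟨hc, hi⟩ : ∃ hc : v ∈ U c, ⟨v, hc⟩ ∈ (td c).bag i := by
            simpa [hbag] using hx
          exact (part hc i (r c) hi (hr c ⟨v, hc⟩ hv)).trans (Adj.reachable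
            (bouquet_adj_none (fun c => (td c).tree) r c))
      exact { preconnected := fun x y => (key x).trans (key y).symm, nonempty := ⟨⟨none, hv⟩⟩ }
    · obtain ⟨c, hc⟩ := hcover v hv
      obtain ⟨i, hi⟩ := (td c).bags_cover ⟨v, hc⟩
      refine { preconnected := ?_, nonempty := ⟨⟨some ⟨c, i⟩, mem_some hc i hi⟩⟩ }
      rintro ⟨_ | ⟨d, j⟩, hx⟩ ⟨_ | ⟨e, k⟩, hy⟩
      · rfl
      · exact absurd hx hv
      · exact absurd hy hv
      · obtain ⟨hd, hj⟩ : ∃ hd : v ∈ U d, ⟨v, hd⟩ ∈ (td d).bag j := by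
          simpa [hbag] using hx
        obtain ⟨he, hk⟩ : ∃ he : v ∈ U e, ⟨v, he⟩ ∈ (td e).bag k := by
          simpa [hbag] using hy
        obtain rfl := hinter d e v hd he hv
        exact part hd j k hj hk

end TreeDecomp

section Treewidth

variable {V : Type} {G : SimpleGraph V}

theorem treewidth_le {ι : Type} (td : TreeDecomp G ι) {k : ℕ}
    (h : ∀ i, (td.bag i).card ≤ k + 1) : treewidth G ≤ k :=
  Nat.sInf_le ⟨ι, td, h⟩

theorem exists_treeDecomp_card_le [Fintype V] (G : SimpleGraph V) :
    ∃ (ι : Type) (td : TreeDecomp G ι), ∀ i, (td.bag i).card ≤ treewidth G + 1 :=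
  Nat.sInf_mem (s := {k | ∃ (ι : Type) (td : TreeDecomp G ι), ∀ i, (td.bag i).card ≤ k + 1})
    ⟨Fintype.card V, Unit, TreeDecomp.trivial G, fun _ => Nat.le_succ _⟩

theorem treewidth_induce_le [Fintype V] (G : SimpleGraph V) (U : Set V) :
    treewidth (G.induce U) ≤ treewidth G := by
  classical
  obtain ⟨ι, td, h⟩ := exists_treeDecomp_card_le G
  refine treewidth_le (td.restrict U) fun i => le_trans ?_ (h i)
  simpa [TreeDecomp.restrict, Finset.card_subtype] using Finset.card_filter_le _ _

end Treewidth

namespace IsCompOf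

open SimpleGraph

variable {V : Type} {G : SimpleGraph V} {S C D : Set V}

/-- A connected set disjoint from `S` that meets a component of `G` minus `S` lies in it. -/
theorem subset_of_connected (hC : IsCompOf G S C) (hDS : Disjoint D S)
    (hD : (G.induce D).Connected) (hCD : (C ∩ D).Nonempty) : D ⊆ C := by
  rw [← hC.2.2.2 (C ∪ D) Set.subset_union_left (hC.2.1.union_left hDS)
    (induce_union_connected hC.2.2.1.preconnected hD.preconnected hCD)]
  exact Set.subset_union_right

theorem eq_of_mem_s11 (hC : IsCompOf G S C) (hD : IsCompOf G S D) {v : V} (hvC : v ∈ C)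
    (hvD : v ∈ D) : C = D :=
  (hD.subset_of_connected hC.2.1 hC.2.2.1 ⟨v, hvD, hvC⟩).antisymm
    (hC.subset_of_connected hD.2.1 hD.2.2.1 ⟨v, hvC, hvD⟩)

theorem nbhd_subset (hC : IsCompOf G S C) : nbhd G C ⊆ S := by
  rintro v ⟨hvC, u, huC, huv⟩
  by_contra hvS
  refine hvC (hC.subset_of_connected (D := {u, v}) ?_ (induce_pair_connected_of_adj huv)
    ⟨u, huC, by simp⟩ (by simp))
  simpa using ⟨Set.disjoint_left.1 hC.2.1 huC, hvS⟩

/-- Every vertex outside `S` lies in a component of `G` minus `S`. -/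
theorem exists_mem [Finite V] (G : SimpleGraph V) {v : V} (hv : v ∉ S) :
    ∃ C, IsCompOf G S C ∧ v ∈ C := by
  obtain ⟨C, hvC, hC⟩ := (Set.toFinite {D : Set V | Disjoint D S ∧
    (G.induce D).Connected}).exists_le_maximal (a := {v})
      ⟨by simpa using hv, { preconnected := .of_subsingleton, nonempty := inferInstance }⟩
  refine ⟨C, ⟨⟨v, hvC rfl⟩, hC.prop.1, hC.prop.2, fun D hCD hD hconn => ?_⟩, hvC rfl⟩
  exact (hC.eq_of_subset ⟨hD, hconn⟩ hCD).symm

end IsCompOf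

/-- if `S` is a clique minimal separator of `G`, then `tw(G)` is the
maximum of `tw(G[C ∪ N_G(C)])` over components `C` of `G - S`. -/
theorem treewidth_clique_minSep {V : Type} [Fintype V] (G : SimpleGraph V)
    (S : Set V) (hclique : G.IsClique S) (hminsep : IsMinSep G S) :
    treewidth G = sSup {k : ℕ | ∃ C : Set V, IsCompOf G S C ∧
      k = treewidth (G.induce (C ∪ nbhd G C))} := by
  classical
  obtain ⟨C₀, -, ⟨hC₀, hfull⟩, -, -⟩ := hminsep
  set A := {k : ℕ | ∃ C : Set V, IsCompOf G S C ∧ k = treewidth (G.induce (C ∪ nbhd G C))}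
  have hA : ∀ k ∈ A, k ≤ treewidth G := by
    rintro _ ⟨C, -, rfl⟩
    exact treewidth_induce_le G _
  refine le_antisymm ?_ (csSup_le ⟨_, C₀, hC₀, rfl⟩ hA)
  choose ι td htd using fun C : {C // IsCompOf G S C} =>
    exists_treeDecomp_card_le (G.induce (C.1 ∪ nbhd G C.1))
  have hcard : ∀ C i, ((td C).bag i).card ≤ sSup A + 1 := fun C i =>
    (htd C i).trans (Nat.add_le_add_right (le_csSup ⟨_, hA⟩ ⟨C.1, C.2, rfl⟩) 1)
  choose r hr using fun C => (td C).exists_bag_of_isClique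
    (K := {x | (x : V) ∈ S}) (Set.toFinite _)
    (fun x hx y hy hne => hclique hx hy (Subtype.coe_injective.ne hne))
  refine treewidth_le (TreeDecomp.glue S.toFinset td r (fun C x hx => hr C (by simpa using hx))
    ?_ ?_ ?_) ?_
  · intro v hv
    obtain ⟨C, hC, hvC⟩ := IsCompOf.exists_mem G (by simpa using hv : v ∉ S)
    exact ⟨⟨C, hC⟩, .inl hvC⟩
  · have side : ∀ u v, G.Adj u v → u ∉ S →
        ∃ C : {C // IsCompOf G S C}, u ∈ C.1 ∪ nbhd G C.1 ∧ v ∈ C.1 ∪ nbhd G C.1 := by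
      intro u v h hu
      obtain ⟨C, hC, huC⟩ := IsCompOf.exists_mem G hu
      refine ⟨⟨C, hC⟩, .inl huC, ?_⟩
      by_cases hv : v ∈ C
      · exact .inl hv
      · exact .inr ⟨hv, u, huC, h⟩
    intro u v h
    by_cases hu : u ∈ S
    · by_cases hv : v ∈ S
      · exact .inl (by simpa using ⟨hu, hv⟩)
      · obtain ⟨C, h₁, h₂⟩ := side v u h.symm hv
        exact .inr ⟨C, h₂, h₁⟩
    · exact .inr (side u v h hu)
  · intro C D v hvC hvD hv
    have hvS : v ∉ S := by simpa using hv
    exact Subtype.ext (C.2.eq_of_mem_s11 D.2 (hvC.resolve_right fun h => hvS (C.2.nbhd_subset h))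
      (hvD.resolve_right fun h => hvS (D.2.nbhd_subset h)))
  · rintro (_ | ⟨C, i⟩)
    · refine le_trans ?_ (hcard ⟨C₀, hC₀⟩ (r ⟨C₀, hC₀⟩))
      rw [← Finset.card_map (Function.Embedding.subtype _)]
      refine Finset.card_le_card fun v hv => ?_
      have hvS : v ∈ S := by simpa [TreeDecomp.glue] using hv
      exact Finset.mem_map.2 ⟨⟨v, .inr (hfull ▸ hvS)⟩, hr ⟨C₀, hC₀⟩ hvS, rfl⟩
    · simpa [TreeDecomp.glue] using hcard C i
end
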